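/- There exist constants γ > 0, c₁ > 0, and n₀ such that for every integer n ≥ n₀ the following holds. Let P be a set of n points chosen independently and uniformly at random from the flat unit torus T². Then with probability at least 1 − n^{−4}, there are at least √n/30 points p ∈ P such that simultaneously: (i) the closed ball of radius c₁·√((log n)/n) centered at p contains no point of P other than p, and (ii) μ(Vor(p,P)) ≥ γ·(log n)/n. -/

import Mathlib

/-!
Let `R = √(log n / n) / 8` and call a sample point isolated if every other sample point is at
distance more than `R` from it in the sup metric of the torus. Since `dist ≤ dT ≤ 2 * dist`, an
isolated point satisfies (i) with `c₁ = 1 / 8`, and its Voronoi cell contains the sup-metric ball of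
radius `R / 4`, whose area is `R² / 4 = log n / (256 n)`. So it suffices to find `√n / 30` isolated
points.

A given point is isolated with probability `(1 - 4 R²) ^ (n - 1)`, so the mean number of isolated
points is at least `n ^ (7 / 8)`. Moving one point changes their number by at most `10`: by
comparing areas, a ball of radius `R` contains at most `9` points at mutual distances more than `R`.
McDiarmid's inequality then bounds the probability of having at most `√n / 30` isolated points by
`exp (-n ^ (3 / 4) / 200)`, which is eventually below `n ^ (-4)`.
-/

open MeasureTheory

instance : Fact ((0 : ℝ) < 1) := ⟨one_pos⟩

/-- The flat unit torus `T² = (ℝ/ℤ)²`. -/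
abbrev T2 : Type := AddCircle (1 : ℝ) × AddCircle (1 : ℝ)

/-- The torus distance on `T²`: the Euclidean combination of the quotient distances on the
two coordinates. -/
noncomputable def dT (p q : T2) : ℝ :=
  Real.sqrt (dist p.1 q.1 ^ 2 + dist p.2 q.2 ^ 2)

/-- The Voronoi cell of `p` with respect to the site set `P`, in the torus metric. -/
def vor (p : T2) (P : Set T2) : Set T2 :=
  {x | ∀ q ∈ P, dT x p ≤ dT x q}

open Filter ProbabilityTheory
open scoped ENNReal Finset NNReal

section Asymptotics

theorem log_div_self_le_one (n : ℕ) : Real.log n / n ≤ 1 :=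
  div_le_one_of_le₀ (Real.log_le_self n.cast_nonneg) n.cast_nonneg

theorem sqrt_div_thirty_le {x : ℝ} (hx : 1 ≤ x) : √x / 30 ≤ x ^ (7 / 8 : ℝ) / 2 := by
  have : √x ≤ x ^ (7 / 8 : ℝ) := by
    rw [Real.sqrt_eq_rpow]
    exact Real.rpow_le_rpow_of_exponent_le hx (by norm_num)
  linarith [Real.sqrt_nonneg x]

theorem exp_neg_two_mul_le_one_sub {x : ℝ} (hx₀ : 0 ≤ x) (hx : x ≤ 1 / 2) :
    Real.exp (-(2 * x)) ≤ 1 - x := by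
  have hx1 : 0 < 1 - x := by linarith
  rw [← Real.le_log_iff_exp_le hx1]
  refine le_trans ?_ (Real.one_sub_inv_le_log_of_pos hx1)
  rw [neg_le_sub_iff_le_add, inv_le_iff_one_le_mul₀ hx1]
  nlinarith

theorem rpow_one_sub_two_mul_le_mul_one_sub_pow {n : ℕ} (hn : n ≠ 0) {a : ℝ} (ha : 0 ≤ a)
    (h : a * (Real.log n / n) ≤ 1 / 2) :
    (n : ℝ) ^ (1 - 2 * a) ≤ n * (1 - a * (Real.log n / n)) ^ (n - 1) := by
  have hn' : (0 : ℝ) < n := by positivity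
  have hlog : 0 ≤ a * (Real.log n / n) := by positivity
  calc (n : ℝ) ^ (1 - 2 * a) = n * Real.exp (-(2 * (a * (Real.log n / n)))) ^ n := by
        rw [← Real.exp_nat_mul, Real.rpow_sub hn', Real.rpow_one, Real.rpow_def_of_pos hn',
          div_eq_mul_inv, ← Real.exp_neg]
        field_simp
    _ ≤ n * (1 - a * (Real.log n / n)) ^ n := by
        gcongr
        exact exp_neg_two_mul_le_one_sub hlog h
    _ ≤ n * (1 - a * (Real.log n / n)) ^ (n - 1) := by
        gcongr n * ?_
        exact pow_le_pow_of_le_one (by linarith) (by linarith) (Nat.sub_le n 1)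

theorem isLittleO_exp_neg_mul_rpow_rpow_atTop {a r : ℝ} (ha : 0 < a) (hr : 0 < r) (b : ℝ) :
    (fun x : ℝ ↦ Real.exp (-a * x ^ r)) =o[atTop] fun x ↦ x ^ b := by
  refine ((isLittleO_exp_neg_mul_rpow_atTop ha (b / r)).comp_tendsto
    (tendsto_rpow_atTop hr)).congr' .rfl ?_
  filter_upwards [eventually_ge_atTop 0] with x hx
  rw [Function.comp_apply, ← Real.rpow_mul hx, mul_div_cancel₀ b hr.ne']

theorem eventually_exp_neg_mul_rpow_le_rpow {a r : ℝ} (ha : 0 < a) (hr : 0 < r) (b : ℝ) :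
    ∀ᶠ n : ℕ in atTop, Real.exp (-a * (n : ℝ) ^ r) ≤ (n : ℝ) ^ b := by
  have h := (isLittleO_exp_neg_mul_rpow_rpow_atTop ha hr b).comp_tendsto
    (tendsto_natCast_atTop_atTop (R := ℝ))
  filter_upwards [h.bound one_pos] with n hn
  simpa [abs_of_nonneg, Real.rpow_nonneg] using hn

end Asymptotics

theorem one_sub_ofReal_le_measure {α : Type*} [MeasurableSpace α] {μ : Measure α}
    [IsProbabilityMeasure μ] {s t : Set α} {p : ℝ} (hst : sᶜ ⊆ t) (ht : μ.real t ≤ p) :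
    1 - ENNReal.ofReal p ≤ μ s := by
  rw [tsub_le_iff_right]
  calc 1 = μ (s ∪ sᶜ) := by rw [Set.union_compl_self, measure_univ]
    _ ≤ μ s + μ sᶜ := measure_union_le s sᶜ
    _ ≤ μ s + μ t := by gcongr
    _ ≤ μ s + ENNReal.ofReal p := by
        gcongr
        rw [← ofReal_measureReal]
        exact ENNReal.ofReal_le_ofReal ht

section SubGaussian

variable {α β : Type*} {mα : MeasurableSpace α} {mβ : MeasurableSpace β}
  {μ : Measure α} {ν : Measure β} {a b : ℝ≥0}

theorem hasSubgaussianMGF_prod [SFinite μ] [SFinite ν] {F : α × β → ℝ} {G : α → ℝ}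
    (hF : AEStronglyMeasurable F (μ.prod ν)) (hG : HasSubgaussianMGF G a μ)
    (hFG : ∀ᵐ x ∂μ, HasSubgaussianMGF (fun y ↦ F (x, y) - G x) b ν) :
    HasSubgaussianMGF F (a + b) (μ.prod ν) := by
  have exp_mul_eq (t : ℝ) (x : α) : (fun y ↦ Real.exp (t * F (x, y))) =
      fun y ↦ Real.exp (t * G x) * Real.exp (t * (F (x, y) - G x)) := by
    ext y
    rw [← Real.exp_add]
    ring_nf
  have integrable_section (t : ℝ) : ∀ᵐ x ∂μ, Integrable (fun y ↦ Real.exp (t * F (x, y))) ν := by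
    filter_upwards [hFG] with x hx
    rw [exp_mul_eq]
    exact (hx.integrable_exp_mul t).const_mul _
  have integral_section_le (t : ℝ) : ∀ᵐ x ∂μ,
      ∫ y, Real.exp (t * F (x, y)) ∂ν ≤ Real.exp (t * G x) * Real.exp (b * t ^ 2 / 2) := by
    filter_upwards [hFG] with x hx
    rw [exp_mul_eq, integral_const_mul]
    gcongr
    exact hx.mgf_le t
  have integrable_exp (t : ℝ) : Integrable (fun z ↦ Real.exp (t * F z)) (μ.prod ν) := by
    have hmeas : AEStronglyMeasurable (fun z ↦ Real.exp (t * F z)) (μ.prod ν) :=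
      Real.continuous_exp.comp_aestronglyMeasurable (hF.const_mul t)
    refine (integrable_prod_iff hmeas).2 ⟨integrable_section t, ?_⟩
    refine ((hG.integrable_exp_mul t).mul_const (Real.exp (b * t ^ 2 / 2))).mono'
      hmeas.norm.integral_prod_right' ?_
    filter_upwards [integral_section_le t] with x hx
    have nonneg : 0 ≤ ∫ y, Real.exp (t * F (x, y)) ∂ν := by positivity
    simpa only [Real.norm_eq_abs, Real.abs_exp, abs_of_nonneg nonneg] using hx
  refine ⟨integrable_exp, fun t ↦ ?_⟩
  calc ∫ z, Real.exp (t * F z) ∂μ.prod ν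
      = ∫ x, ∫ y, Real.exp (t * F (x, y)) ∂ν ∂μ := integral_prod _ (integrable_exp t)
    _ ≤ ∫ x, Real.exp (t * G x) * Real.exp (b * t ^ 2 / 2) ∂μ :=
        integral_mono_ae (integrable_exp t).integral_prod_left
          ((hG.integrable_exp_mul t).mul_const _) (integral_section_le t)
    _ = mgf G μ t * Real.exp (b * t ^ 2 / 2) := integral_mul_const _ _
    _ ≤ Real.exp (a * t ^ 2 / 2) * Real.exp (b * t ^ 2 / 2) := by
        gcongr
        exact hG.mgf_le t
    _ = Real.exp ((a + b : ℝ≥0) * t ^ 2 / 2) := by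
        rw [← Real.exp_add, NNReal.coe_add]
        ring_nf

theorem hasSubgaussianMGF_sub_integral_of_comp_measurableEquiv {e : α ≃ᵐ β}
    (he : MeasurePreserving e μ ν) {f : β → ℝ}
    (h : HasSubgaussianMGF (fun x ↦ f (e x) - ∫ x, f (e x) ∂μ) a μ) :
    HasSubgaussianMGF (fun y ↦ f y - ∫ y, f y ∂ν) a ν := by
  rw [he.integral_comp'] at h
  rw [← he.symm.map_eq] at h
  simpa [Function.comp_def] using HasSubgaussianMGF.of_map e.symm.measurable.aemeasurable h

theorem hasSubgaussianMGF_sub_integral_of_abs_sub_le [IsProbabilityMeasure μ] {f : α → ℝ}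
    {c : ℝ≥0} (hf : AEMeasurable f μ) (hfc : ∀ x y, |f x - f y| ≤ c) :
    HasSubgaussianMGF (fun x ↦ f x - ∫ y, f y ∂μ) ((c / 2) ^ 2) μ := by
  have := nonempty_of_isProbabilityMeasure μ
  have le_add (x y : α) : f x ≤ f y + c := by linarith [(abs_le.1 (hfc x y)).2]
  have bddBelow : BddBelow (Set.range f) :=
    let x₀ := Classical.arbitrary α
    ⟨f x₀ - c, Set.forall_mem_range.2 fun x ↦ by linarith [le_add x₀ x]⟩
  have mem_Icc (x : α) : f x ∈ Set.Icc (⨅ y, f y) ((⨅ y, f y) + c) :=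
    ⟨ciInf_le bddBelow x, by linarith [le_ciInf fun y ↦ sub_le_iff_le_add.2 (le_add x y)]⟩
  simpa using hasSubgaussianMGF_of_mem_Icc hf (ae_of_all μ mem_Icc)

end SubGaussian

section McDiarmid

/-- The bounded difference condition of McDiarmid's inequality: changing only the `i`-th coordinate
changes the value of `f` by at most `c i`. -/
def HasBoundedDifferences {ι : Type*} {Ω : ι → Type*} (f : (∀ i, Ω i) → ℝ) (c : ι → ℝ≥0) : Prop :=
  ∀ i ω ω', (∀ j, j ≠ i → ω j = ω' j) → |f ω - f ω'| ≤ c i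

theorem HasBoundedDifferences.comp_piCongrLeft {ι κ : Type*} {Ω : ι → Type*}
    {f : (∀ i, Ω i) → ℝ} {c : ι → ℝ≥0} (hfc : HasBoundedDifferences f c) (e : κ ≃ ι) :
    HasBoundedDifferences (fun ω ↦ f (Equiv.piCongrLeft Ω e ω)) fun k ↦ c (e k) := by
  refine fun k ω ω' h ↦ hfc _ _ _ fun i hi ↦ ?_
  obtain ⟨l, rfl⟩ := e.surjective i
  simpa only [Equiv.piCongrLeft_apply_apply] using h l fun hlk ↦ hi (congrArg e hlk)

theorem HasBoundedDifferences.integral {ι : Type*} {Ω : ι → Type*} {α : Type*}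
    {mα : MeasurableSpace α} {μ : Measure α} [IsProbabilityMeasure μ] {f : (∀ i, Ω i) → α → ℝ}
    {c : ι → ℝ≥0} (hfc : ∀ x, HasBoundedDifferences (fun ω ↦ f ω x) c)
    (hf : ∀ ω, Integrable (f ω) μ) : HasBoundedDifferences (fun ω ↦ ∫ x, f ω x ∂μ) c := by
  intro i ω ω' h
  rw [← integral_sub (hf ω) (hf ω')]
  simpa using norm_integral_le_of_norm_le_const (μ := μ) (f := fun x ↦ f ω x - f ω' x)
    (ae_of_all _ fun x ↦ hfc x i ω ω' h)

section Option

variable {ι : Type*} {Ω : Option ι → Type*} [∀ i, MeasurableSpace (Ω i)] {f : (∀ i, Ω i) → ℝ}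
  {c : Option ι → ℝ≥0}

theorem abs_piOptionEquivProd_symm_sub_le (hfc : HasBoundedDifferences f c)
    (ω : ∀ i : ι, Ω (some i)) (x y : Ω none) :
    |f ((MeasurableEquiv.piOptionEquivProd Ω).symm (ω, x)) -
      f ((MeasurableEquiv.piOptionEquivProd Ω).symm (ω, y))| ≤ c none := by
  refine hfc none _ _ fun j hj ↦ ?_
  obtain ⟨i, rfl⟩ := Option.ne_none_iff_exists'.1 hj
  rfl

theorem hasBoundedDifferences_piOptionEquivProd_symm (hfc : HasBoundedDifferences f c)
    (x : Ω none) :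
    HasBoundedDifferences (fun ω ↦ f ((MeasurableEquiv.piOptionEquivProd Ω).symm (ω, x)))
      fun i ↦ c (some i) := by
  refine fun i ω ω' h ↦ hfc (some i) _ _ fun j hj ↦ ?_
  cases j with
  | none => rfl
  | some j => exact h j fun hji ↦ hj (congrArg some hji)

theorem hasSubgaussianMGF_option [Fintype ι] {μ : ∀ i, Measure (Ω i)}
    [∀ i, IsProbabilityMeasure (μ i)] (hf : Measurable f) (hfc : HasBoundedDifferences f c)
    (ih : ∀ g : (∀ i : ι, Ω (some i)) → ℝ, Measurable g →
      HasBoundedDifferences g (fun i ↦ c (some i)) →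
      HasSubgaussianMGF (fun ω ↦ g ω - ∫ ω', g ω' ∂Measure.pi fun i ↦ μ (some i))
        (∑ i, (c (some i) / 2) ^ 2) (Measure.pi fun i ↦ μ (some i))) :
    HasSubgaussianMGF (fun ω ↦ f ω - ∫ ω', f ω' ∂Measure.pi μ) (∑ i, (c i / 2) ^ 2)
      (Measure.pi μ) := by
  -- Averaging `f` over the coordinate `none` gives a function `g` of the other coordinates with the
  -- same bounded differences; the fluctuation around `g` is controlled by Hoeffding's lemma.
  set e := (MeasurableEquiv.piOptionEquivProd Ω).symm
  set ν := Measure.pi fun i : ι ↦ μ (some i)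
  have he : MeasurePreserving e (ν.prod (μ none)) (Measure.pi μ) :=
    ⟨e.measurable, Measure.pi_map_piOptionEquivProd μ⟩
  have hfe : Measurable fun z ↦ f (e z) := hf.comp e.measurable
  have subgaussian_none (ω : ∀ i, Ω (some i)) : HasSubgaussianMGF
      (fun x ↦ f (e (ω, x)) - ∫ y, f (e (ω, y)) ∂μ none) ((c none / 2) ^ 2) (μ none) :=
    hasSubgaussianMGF_sub_integral_of_abs_sub_le (hfe.comp measurable_prodMk_left).aemeasurable
      (abs_piOptionEquivProd_symm_sub_le hfc ω)
  set g := fun ω ↦ ∫ x, f (e (ω, x)) ∂μ none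
  have hg : Measurable g := hfe.stronglyMeasurable.integral_prod_right'.measurable
  have hgc : HasBoundedDifferences g fun i ↦ c (some i) :=
    .integral (hasBoundedDifferences_piOptionEquivProd_symm hfc)
      fun ω ↦ integrable_add_const_iff.1 (subgaussian_none ω).integrable
  have key : HasSubgaussianMGF (fun z ↦ f (e z) - ∫ ω, g ω ∂ν)
      (∑ i, (c (some i) / 2) ^ 2 + (c none / 2) ^ 2) (ν.prod (μ none)) :=
    hasSubgaussianMGF_prod (hfe.sub_const _).aestronglyMeasurable (ih g hg hgc)
      (ae_of_all _ fun ω ↦ by simpa only [sub_sub_sub_cancel_right] using subgaussian_none ω)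
  have hint : Integrable (fun z ↦ f (e z)) (ν.prod (μ none)) :=
    integrable_add_const_iff.1 key.integrable
  refine hasSubgaussianMGF_sub_integral_of_comp_measurableEquiv he ?_
  rwa [Fintype.sum_option, add_comm, integral_prod _ hint]

end Option

variable {ι : Type*} [Fintype ι] {Ω : ι → Type*} [∀ i, MeasurableSpace (Ω i)]
  {μ : ∀ i, Measure (Ω i)} [∀ i, IsProbabilityMeasure (μ i)] {f : (∀ i, Ω i) → ℝ} {c : ι → ℝ≥0}

theorem HasBoundedDifferences.hasSubgaussianMGF (hfc : HasBoundedDifferences f c)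
    (hf : Measurable f) :
    HasSubgaussianMGF (fun ω ↦ f ω - ∫ ω', f ω' ∂Measure.pi μ) (∑ i, (c i / 2) ^ 2)
      (Measure.pi μ) := by
  refine Fintype.induction_empty_option (P := fun ι _ ↦ ∀ (Ω : ι → Type _)
    (_ : ∀ i, MeasurableSpace (Ω i)) (μ : ∀ i, Measure (Ω i)) (_ : ∀ i, IsProbabilityMeasure (μ i))
    (f : (∀ i, Ω i) → ℝ) (c : ι → ℝ≥0), HasBoundedDifferences f c → Measurable f →
      HasSubgaussianMGF (fun ω ↦ f ω - ∫ ω', f ω' ∂Measure.pi μ) (∑ i, (c i / 2) ^ 2)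
        (Measure.pi μ)) ?of_equiv ?empty ?option ι Ω _ μ ‹_› f c hfc hf
  case of_equiv =>
    intro κ ι _ e ih Ω _ μ _ f c hfc hf
    let := Fintype.ofEquiv ι e.symm
    have he := measurePreserving_piCongrLeft μ e
    refine hasSubgaussianMGF_sub_integral_of_comp_measurableEquiv he ?_
    rw [← e.sum_comp]
    exact ih _ _ _ inferInstance _ _ (hfc.comp_piCongrLeft e) (hf.comp he.measurable)
  case empty =>
    intro Ω _ μ _ f c _ _
    simp [Subsingleton.elim _ (default : ∀ i, Ω i)]
  case option =>
    intro ι _ ih Ω _ μ _ f c hfc hf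
    exact hasSubgaussianMGF_option hf hfc fun g hg hgc ↦ ih _ _ _ inferInstance _ _ hgc hg

/-- **McDiarmid's inequality**, lower tail. -/
theorem HasBoundedDifferences.measureReal_le_integral_sub_le (hfc : HasBoundedDifferences f c)
    (hf : Measurable f) {ε : ℝ} (hε : 0 ≤ ε) :
    (Measure.pi μ).real {ω | f ω ≤ ∫ ω', f ω' ∂Measure.pi μ - ε} ≤
      Real.exp (-2 * ε ^ 2 / ∑ i, (c i : ℝ) ^ 2) := by
  have h := (hfc.hasSubgaussianMGF hf (μ := μ)).neg.measure_ge_le hε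
  convert h using 2
  · simp only [Pi.neg_apply, neg_sub, le_sub_comm]
  · simp only [div_pow, ← Finset.sum_div, NNReal.coe_div, NNReal.coe_sum, NNReal.coe_pow,
      NNReal.coe_ofNat]
    ring

end McDiarmid

section Packing

theorem packingNumber_closedBall_le_of_measure_closedBall_le {X : Type*} [PseudoMetricSpace X]
    [MeasurableSpace X] [OpensMeasurableSpace X] {μ : Measure X} {R : ℝ≥0} {x : X} {m : ℝ≥0∞}
    {K : ℕ} (hm : m ≠ 0) (hm' : m ≠ ∞)
    (hmμ : ∀ y ∈ Metric.closedBall x R, m ≤ μ (Metric.closedBall y (R / 2)))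
    (hK : μ (Metric.closedBall x (3 * R / 2)) ≤ K * m) :
    Metric.packingNumber R (Metric.closedBall x R) ≤ K := by
  refine iSup₂_le fun C hC ↦ iSup_le fun hsep ↦ ?_
  have disjoint : Pairwise (Function.onFun Disjoint
      fun y : C ↦ Metric.closedBall (y : X) (R / 2)) := by
    intro y z hyz
    have : (R : ℝ≥0∞) < edist (y : X) z := hsep y.2 z.2 (Subtype.coe_injective.ne hyz)
    refine Metric.closedBall_disjoint_closedBall ?_
    rwa [add_halves, ← coe_nndist, NNReal.coe_lt_coe, ← ENNReal.coe_lt_coe, ← edist_nndist]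
  have iUnion_subset : ⋃ y : C, Metric.closedBall (y : X) (R / 2) ⊆
      Metric.closedBall x (3 * R / 2) :=
    Set.iUnion_subset fun y ↦ Metric.closedBall_subset_closedBall' <| by
      linarith [Metric.mem_closedBall.1 (hC y.2)]
  have key : (C.encard : ℝ≥0∞) * m ≤ K * m := calc
    (C.encard : ℝ≥0∞) * m = ∑' _ : C, m := (ENNReal.tsum_const m).symm
    _ ≤ ∑' y : C, μ (Metric.closedBall (y : X) (R / 2)) :=
        ENNReal.tsum_le_tsum fun y ↦ hmμ y (hC y.2)
    _ ≤ μ (⋃ y : C, Metric.closedBall (y : X) (R / 2)) :=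
        tsum_meas_le_meas_iUnion_of_disjoint μ (fun _ ↦ measurableSet_closedBall) disjoint
    _ ≤ μ (Metric.closedBall x (3 * R / 2)) := measure_mono iUnion_subset
    _ ≤ K * m := hK
  exact_mod_cast (ENNReal.mul_le_mul_iff_left hm hm').1 key

end Packing

section IsolatedPoints

variable {ι X : Type*} [Fintype ι] [PseudoMetricSpace X] {R : ℝ} {ω : ι → X} {i j : ι}

open scoped Classical in
/-- The indices of the isolated points of a finite family `ω`: those `i` for which every other
member of the family is at distance greater than `R` from `ω i`. Working with indices rather than
points keeps repeated points apart, so the definition makes sense for every family. -/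
noncomputable def isolatedIndices (R : ℝ) (ω : ι → X) : Finset ι :=
  {i | ∀ j, j ≠ i → R < dist (ω j) (ω i)}

theorem mem_isolatedIndices :
    i ∈ isolatedIndices R ω ↔ ∀ j, j ≠ i → R < dist (ω j) (ω i) := by
  simp [isolatedIndices]

theorem eq_of_mem_isolatedIndices (hi : i ∈ isolatedIndices R ω) (hij : dist (ω j) (ω i) ≤ R) :
    j = i :=
  by_contra fun hne ↦ (mem_isolatedIndices.1 hi j hne).not_ge hij

theorem injOn_isolatedIndices (hR : 0 ≤ R) (ω : ι → X) : Set.InjOn ω (isolatedIndices R ω) :=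
  fun i _ j hj hij ↦ eq_of_mem_isolatedIndices hj <| by rwa [hij, dist_self]

section BoundedDifferences

open scoped Classical in
theorem card_filter_isolatedIndices_le_packingNumber (R : ℝ≥0) (ω : ι → X) (x : X) :
    (#{i ∈ isolatedIndices R ω | ω i ∈ Metric.closedBall x R} : ℕ∞) ≤
      Metric.packingNumber R (Metric.closedBall x R) := by
  set D := {i ∈ isolatedIndices R ω | ω i ∈ Metric.closedBall x R}
  have injOn : Set.InjOn ω D :=
    (injOn_isolatedIndices R.coe_nonneg ω).mono (Finset.filter_subset _ _)
  have subset_closedBall : ω '' D ⊆ Metric.closedBall x R :=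
    Set.image_subset_iff.2 fun _ hi ↦ (Finset.mem_filter.1 hi).2
  have isSeparated : Metric.IsSeparated R (ω '' D) := by
    rintro _ ⟨i, _, rfl⟩ _ ⟨j, hj, rfl⟩ hij
    have : (R : ℝ) < dist (ω i) (ω j) :=
      mem_isolatedIndices.1 (Finset.mem_filter.1 hj).1 i (ne_of_apply_ne ω hij)
    rwa [edist_nndist, ENNReal.coe_lt_coe, ← NNReal.coe_lt_coe]
  rw [← Set.encard_coe_eq_coe_finsetCard, ← injOn.encard_image]
  exact isSeparated.encard_le_packingNumber subset_closedBall

theorem card_isolatedIndices_le_of_eq_off {R : ℝ≥0} {K : ℕ} {ω ω' : ι → X} {i : ι}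
    (hK : Metric.packingNumber R (Metric.closedBall (ω' i) R) ≤ K)
    (h : ∀ j, j ≠ i → ω j = ω' j) :
    #(isolatedIndices R ω) ≤ #(isolatedIndices R ω') + (K + 1) := by
  classical
  set D := {j ∈ isolatedIndices R ω | ω j ∈ Metric.closedBall (ω' i) R}
  have card_D_le : #D ≤ K := by
    exact_mod_cast (card_filter_isolatedIndices_le_packingNumber R ω (ω' i)).trans hK
  -- Moving `ω i` to `ω' i` can only spoil the isolation of `i` and of points near `ω' i`.
  have subset_union : isolatedIndices R ω ⊆ isolatedIndices R ω' ∪ insert i D := by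
    intro j hj
    by_contra hj'
    obtain ⟨hjω', hji, hjD⟩ : j ∉ isolatedIndices R ω' ∧ j ≠ i ∧ j ∉ D := by
      simpa only [Finset.mem_union, Finset.mem_insert, not_or] using hj'
    refine hjω' (mem_isolatedIndices.2 fun k hkj ↦ ?_)
    rw [← h j hji]
    obtain rfl | hki := eq_or_ne k i
    · rw [dist_comm]
      exact not_le.1 fun hdist ↦ hjD (Finset.mem_filter.2 ⟨hj, hdist⟩)
    · rw [← h k hki]
      exact mem_isolatedIndices.1 hj k hkj
  calc #(isolatedIndices R ω)
      ≤ #(isolatedIndices R ω' ∪ insert i D) := Finset.card_le_card subset_union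
    _ ≤ #(isolatedIndices R ω') + #(insert i D) := Finset.card_union_le _ _
    _ ≤ #(isolatedIndices R ω') + (K + 1) := by
        gcongr
        exact (Finset.card_insert_le i D).trans (by gcongr)

theorem hasBoundedDifferences_card_isolatedIndices {R : ℝ≥0} {K : ℕ}
    (hK : ∀ x : X, Metric.packingNumber R (Metric.closedBall x R) ≤ K) :
    HasBoundedDifferences (fun ω : ι → X ↦ (#(isolatedIndices R ω) : ℝ)) fun _ ↦ K + 1 := by
  intro i ω ω' h
  have le : (#(isolatedIndices R ω) : ℝ) ≤ #(isolatedIndices R ω') + (K + 1) := by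
    exact_mod_cast card_isolatedIndices_le_of_eq_off (hK (ω' i)) h
  have ge : (#(isolatedIndices R ω') : ℝ) ≤ #(isolatedIndices R ω) + (K + 1) := by
    exact_mod_cast card_isolatedIndices_le_of_eq_off (hK (ω i)) fun j hj ↦ (h j hj).symm
  push_cast
  exact abs_sub_le_iff.2 ⟨by linarith, by linarith⟩

end BoundedDifferences

theorem card_isolatedIndices_eq_sum_indicator (R : ℝ) (ω : ι → X) :
    (#(isolatedIndices R ω) : ℝ) =
      ∑ i, {ω : ι → X | i ∈ isolatedIndices R ω}.indicator 1 ω := by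
  classical
  simp [Set.indicator_apply]

variable [MeasurableSpace X] [OpensMeasurableSpace X] [SecondCountableTopology X]

theorem measurableSet_mem_isolatedIndices (R : ℝ) (i : ι) :
    MeasurableSet {ω : ι → X | i ∈ isolatedIndices R ω} := by
  simp only [mem_isolatedIndices, Set.ofPred_forall]
  exact .iInter fun j ↦ .iInter fun _ ↦
    measurableSet_lt measurable_const ((measurable_pi_apply j).dist (measurable_pi_apply i))

theorem measurable_card_isolatedIndices (R : ℝ) :
    Measurable fun ω : ι → X ↦ (#(isolatedIndices R ω) : ℝ) := by
  simp only [card_isolatedIndices_eq_sum_indicator]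
  exact Finset.measurable_fun_sum _ fun i _ ↦
    measurable_one.indicator (measurableSet_mem_isolatedIndices R i)

variable {μ : Measure X} [IsProbabilityMeasure μ] {v : ℝ}

theorem measure_mem_isolatedIndices {q : ℝ≥0∞} (hq : ∀ x, μ (Metric.closedBall x R)ᶜ = q)
    (i : ι) :
    (Measure.pi fun _ ↦ μ) {ω : ι → X | i ∈ isolatedIndices R ω} = q ^ (Fintype.card ι - 1) := by
  classical
  set e := MeasurableEquiv.piEquivPiSubtypeProd (fun _ : ι ↦ X) (· = i)
  have he := measurePreserving_piEquivPiSubtypeProd (fun _ : ι ↦ μ) (· = i)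
  set S := e.symm ⁻¹' {ω | i ∈ isolatedIndices R ω}
  have fibre_eq (x : {j // j = i} → X) :
      Prod.mk x ⁻¹' S = Set.univ.pi fun _ ↦ (Metric.closedBall (x ⟨i, rfl⟩) R)ᶜ := by
    ext y
    simp only [S, e, mem_isolatedIndices, Set.mem_preimage, Set.mem_ofPred_eq, Set.mem_univ_pi,
      Set.mem_compl_iff, Metric.mem_closedBall, not_le, Subtype.forall]
    refine forall₂_congr fun j hj ↦ ?_
    simp [MeasurableEquiv.piEquivPiSubtypeProd, hj]
  have card_others : Fintype.card {j // ¬ j = i} = Fintype.card ι - 1 := by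
    simp [Fintype.card_subtype_compl]
  have hS : MeasurableSet S := e.symm.measurable (measurableSet_mem_isolatedIndices R i)
  refine (he.symm.measure_preimage_equiv _).symm.trans ((Measure.prod_apply hS).trans ?_)
  simp only [fibre_eq, Measure.pi_pi, hq, Finset.prod_const, Finset.card_univ, card_others,
    lintegral_const, measure_univ, mul_one]

theorem measureReal_mem_isolatedIndices (hv : ∀ x, μ.real (Metric.closedBall x R) = v) (i : ι) :
    (Measure.pi fun _ ↦ μ).real {ω : ι → X | i ∈ isolatedIndices R ω} =
      (1 - v) ^ (Fintype.card ι - 1) := by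
  have hq (x : X) : μ (Metric.closedBall x R)ᶜ = ENNReal.ofReal (1 - v) := by
    rw [← ofReal_measureReal, probReal_compl_eq_one_sub measurableSet_closedBall, hv]
  have hv1 : 0 ≤ 1 - v := by
    have := nonempty_of_isProbabilityMeasure μ
    rw [sub_nonneg, ← hv (Classical.arbitrary X)]
    exact measureReal_le_one
  rw [measureReal_def, measure_mem_isolatedIndices hq, ENNReal.toReal_pow,
    ENNReal.toReal_ofReal hv1]

theorem integral_card_isolatedIndices (hv : ∀ x, μ.real (Metric.closedBall x R) = v) :
    ∫ ω : ι → X, (#(isolatedIndices R ω) : ℝ) ∂(Measure.pi fun _ ↦ μ) =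
      Fintype.card ι * (1 - v) ^ (Fintype.card ι - 1) := by
  simp only [card_isolatedIndices_eq_sum_indicator]
  rw [integral_finsetSum _ fun i _ ↦
    (integrable_const 1).indicator (measurableSet_mem_isolatedIndices R i)]
  simp [integral_indicator_one (measurableSet_mem_isolatedIndices R _),
    measureReal_mem_isolatedIndices hv]

theorem measureReal_card_isolatedIndices_le {R : ℝ≥0} {K : ℕ}
    (hv : ∀ x, μ.real (Metric.closedBall x R) = v)
    (hK : ∀ x : X, Metric.packingNumber R (Metric.closedBall x R) ≤ K) {ε : ℝ} (hε : 0 ≤ ε) :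
    (Measure.pi fun _ : ι ↦ μ).real
        {ω | (#(isolatedIndices R ω) : ℝ) ≤
          Fintype.card ι * (1 - v) ^ (Fintype.card ι - 1) - ε} ≤
      Real.exp (-2 * ε ^ 2 / (Fintype.card ι * (K + 1) ^ 2)) := by
  have := (hasBoundedDifferences_card_isolatedIndices hK).measureReal_le_integral_sub_le
    (μ := fun _ : ι ↦ μ) (measurable_card_isolatedIndices R) hε
  rw [integral_card_isolatedIndices hv] at this
  simpa using this

end IsolatedPoints

section Torus

instance : IsProbabilityMeasure (volume : Measure (AddCircle (1 : ℝ))) :=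
  ⟨by rw [AddCircle.measure_univ, ENNReal.ofReal_one]⟩

instance : IsProbabilityMeasure (volume : Measure T2) := by
  rw [Measure.volume_eq_prod]
  infer_instance

theorem volume_closedBall_T2 (p : T2) {r : ℝ} (hr₀ : 0 ≤ r) (hr : 2 * r ≤ 1) :
    volume (Metric.closedBall p r) = ENNReal.ofReal (4 * r ^ 2) := by
  rw [← Prod.mk.eta (p := p), ← closedBall_prod_same, Measure.volume_eq_prod, Measure.prod_prod,
    AddCircle.volume_closedBall, AddCircle.volume_closedBall, min_eq_right hr,
    ← ENNReal.ofReal_mul (by positivity)]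
  ring_nf

theorem dist_le_dT (p q : T2) : dist p q ≤ dT p q :=
  max_le (Real.le_sqrt_of_sq_le (le_add_of_nonneg_right (sq_nonneg _)))
    (Real.le_sqrt_of_sq_le (le_add_of_nonneg_left (sq_nonneg _)))

theorem dT_le_two_mul_dist (p q : T2) : dT p q ≤ 2 * dist p q := by
  have fst_le : dist p.1 q.1 ≤ dist p q := le_max_left _ _
  have snd_le : dist p.2 q.2 ≤ dist p q := le_max_right _ _
  refine Real.sqrt_le_iff.2 ⟨by positivity, ?_⟩
  calc dist p.1 q.1 ^ 2 + dist p.2 q.2 ^ 2 ≤ dist p q ^ 2 + dist p q ^ 2 := by gcongr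
    _ ≤ (2 * dist p q) ^ 2 := by linarith [sq_nonneg (dist p q)]

theorem packingNumber_closedBall_T2_le (p : T2) {R : ℝ≥0} (hR₀ : R ≠ 0) (hR : 3 * (R : ℝ) ≤ 1) :
    Metric.packingNumber R (Metric.closedBall p R) ≤ (9 : ℕ) := by
  have hR_pos : 0 < (R : ℝ) := NNReal.coe_pos.2 (pos_iff_ne_zero.2 hR₀)
  refine packingNumber_closedBall_le_of_measure_closedBall_le (μ := volume)
    (m := ENNReal.ofReal (4 * (R / 2) ^ 2)) ?_ ENNReal.ofReal_ne_top (fun q _ ↦ ?_) ?_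
  · exact (ENNReal.ofReal_pos.2 (by positivity)).ne'
  · exact (volume_closedBall_T2 q (by positivity) (by linarith)).ge
  · rw [volume_closedBall_T2 p (by positivity) (by linarith), ← ENNReal.ofReal_natCast,
      ← ENNReal.ofReal_mul (by positivity)]
    exact ENNReal.ofReal_le_ofReal (by push_cast; linarith)

variable {ι : Type*} [Fintype ι] {R : ℝ} {ω : ι → T2} {i : ι}

theorem eq_of_mem_isolatedIndices_of_dT_le (hi : i ∈ isolatedIndices R ω) {q : T2}
    (hq : q ∈ Set.range ω) (hqi : dT q (ω i) ≤ R) : q = ω i := by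
  obtain ⟨j, rfl⟩ := hq
  rw [eq_of_mem_isolatedIndices hi ((dist_le_dT _ _).trans hqi)]

theorem closedBall_subset_vor_of_mem_isolatedIndices (hi : i ∈ isolatedIndices R ω) :
    Metric.closedBall (ω i) (R / 4) ⊆ vor (ω i) (Set.range ω) := by
  rintro x hx _ ⟨j, rfl⟩
  obtain rfl | hji := eq_or_ne j i
  · rfl
  have hxi : dist x (ω i) ≤ R / 4 := hx
  have hij : R < dist (ω j) (ω i) := mem_isolatedIndices.1 hi j hji
  calc dT x (ω i) ≤ 2 * dist x (ω i) := dT_le_two_mul_dist x (ω i)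
    _ ≤ dist x (ω j) := by
        linarith [dist_triangle_left (ω j) (ω i) x, dist_nonneg (x := x) (y := ω i)]
    _ ≤ dT x (ω j) := dist_le_dT x (ω j)

theorem le_volume_vor_of_mem_isolatedIndices (hR₀ : 0 ≤ R) (hR : R ≤ 2)
    (hi : i ∈ isolatedIndices R ω) :
    ENNReal.ofReal (R ^ 2 / 4) ≤ volume (vor (ω i) (Set.range ω)) :=
  calc ENNReal.ofReal (R ^ 2 / 4) = ENNReal.ofReal (4 * (R / 4) ^ 2) := by ring_nf
    _ = volume (Metric.closedBall (ω i) (R / 4)) :=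
        (volume_closedBall_T2 (ω i) (by positivity) (by linarith)).symm
    _ ≤ volume (vor (ω i) (Set.range ω)) :=
        measure_mono (closedBall_subset_vor_of_mem_isolatedIndices hi)

theorem card_isolatedIndices_le_ncard (hR₀ : 0 ≤ R) (hR : R ≤ 2) (ω : ι → T2) :
    #(isolatedIndices R ω) ≤
      {p ∈ Set.range ω | (∀ q ∈ Set.range ω, dT q p ≤ R → q = p) ∧
        ENNReal.ofReal (R ^ 2 / 4) ≤ volume (vor p (Set.range ω))}.ncard := by
  rw [← Set.ncard_coe_finset, ← (injOn_isolatedIndices hR₀ ω).ncard_image]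
  refine Set.ncard_le_ncard ?_ ((Set.finite_range ω).subset fun p hp ↦ hp.1)
  rintro _ ⟨i, hi, rfl⟩
  exact ⟨Set.mem_range_self i, fun q ↦ eq_of_mem_isolatedIndices_of_dT_le hi,
    le_volume_vor_of_mem_isolatedIndices hR₀ hR hi⟩

theorem measureReal_card_isolatedIndices_T2_le {R : ℝ≥0} (hR₀ : R ≠ 0) (hR : 3 * (R : ℝ) ≤ 1)
    {ε : ℝ} (hε : 0 ≤ ε) :
    (Measure.pi fun _ : ι ↦ (volume : Measure T2)).real
        {ω | (#(isolatedIndices R ω) : ℝ) ≤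
          Fintype.card ι * (1 - 4 * (R : ℝ) ^ 2) ^ (Fintype.card ι - 1) - ε} ≤
      Real.exp (-ε ^ 2 / (50 * Fintype.card ι)) := by
  have measureReal_closedBall (p : T2) :
      volume.real (Metric.closedBall p R) = 4 * (R : ℝ) ^ 2 := by
    rw [measureReal_def, volume_closedBall_T2 p R.coe_nonneg (by linarith [R.coe_nonneg]),
      ENNReal.toReal_ofReal (by positivity)]
  refine (measureReal_card_isolatedIndices_le measureReal_closedBall
    (packingNumber_closedBall_T2_le · hR₀ hR) hε).trans_eq ?_
  push_cast
  ring_nf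

end Torus

section IsolationRadius

/-- The scale at which the proof looks for isolated points. A sup-metric ball of this radius has
area `log n / (16 n)`, so each of `n` random points is isolated with probability about
`n ^ (-1/16)`. -/
noncomputable def isolationRadius (n : ℕ) : ℝ≥0 :=
  ⟨1 / 8 * √(Real.log n / n), by positivity⟩

variable {n : ℕ}

theorem sq_isolationRadius (n : ℕ) : (isolationRadius n : ℝ) ^ 2 = Real.log n / n / 64 := by
  change (1 / 8 * √(Real.log n / n)) ^ 2 = _
  rw [mul_pow, Real.sq_sqrt (by positivity)]
  ring

theorem isolationRadius_ne_zero (hn : 2 ≤ n) : isolationRadius n ≠ 0 := by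
  have : 0 < Real.log n := Real.log_pos (by exact_mod_cast hn)
  refine NNReal.coe_ne_zero.1 (pow_ne_zero_iff two_ne_zero |>.1 ?_)
  rw [sq_isolationRadius]
  positivity

theorem isolationRadius_le (n : ℕ) : (isolationRadius n : ℝ) ≤ 1 / 8 := by
  refine abs_le_of_sq_le_sq' ?_ (by norm_num) |>.2
  rw [sq_isolationRadius]
  linarith [log_div_self_le_one n]

theorem rpow_le_mul_one_sub_sq_isolationRadius_pow (hn : n ≠ 0) :
    (n : ℝ) ^ (7 / 8 : ℝ) ≤ n * (1 - 4 * (isolationRadius n : ℝ) ^ 2) ^ (n - 1) := by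
  convert rpow_one_sub_two_mul_le_mul_one_sub_pow hn (a := 1 / 16) (by norm_num)
    (by linarith [log_div_self_le_one n]) using 4
  · norm_num
  · rw [sq_isolationRadius]
    ring

theorem measureReal_card_isolatedIndices_isolationRadius_le (hn : 2 ≤ n) :
    (Measure.pi fun _ : Fin n ↦ (volume : Measure T2)).real
        {ω | (#(isolatedIndices (isolationRadius n) ω) : ℝ) ≤ √n / 30} ≤
      Real.exp (-(1 / 200) * (n : ℝ) ^ (3 / 4 : ℝ)) := by
  set ε := (n : ℝ) ^ (7 / 8 : ℝ) / 2 with hε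
  have threshold_le :
      √n / 30 ≤ n * (1 - 4 * (isolationRadius n : ℝ) ^ 2) ^ (n - 1) - ε := by
    linarith [sqrt_div_thirty_le (x := n) (by exact_mod_cast one_le_two.trans hn),
      rpow_le_mul_one_sub_sq_isolationRadius_pow (n := n) (by positivity)]
  have tail := measureReal_card_isolatedIndices_T2_le (ι := Fin n) (isolationRadius_ne_zero hn)
    (by linarith [isolationRadius_le n]) (ε := ε) (by positivity)
  rw [Fintype.card_fin] at tail
  have exponent_eq : -ε ^ 2 / (50 * n) = -(1 / 200) * (n : ℝ) ^ (3 / 4 : ℝ) := by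
    have sq_rpow_eq : ((n : ℝ) ^ (7 / 8 : ℝ)) ^ 2 = n * (n : ℝ) ^ (3 / 4 : ℝ) := by
      rw [← Real.rpow_natCast, ← Real.rpow_mul n.cast_nonneg,
        ← Real.rpow_one_add' n.cast_nonneg (by norm_num)]
      norm_num
    rw [hε, div_pow, sq_rpow_eq]
    field_simp
    norm_num
  rw [exponent_eq] at tail
  exact (measureReal_mono fun ω hω ↦ le_trans hω threshold_le).trans tail

end IsolationRadius

/-- There are constants `γ, c₁ > 0` such that for all sufficiently large `n`: if `n` points
are chosen independently and uniformly from the flat unit torus, then with probability at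
least `1 - n^{-4}` there are at least `√n/30` points `p` among them such that the closed
ball of radius `c₁ √((log n)/n)` around `p` contains no other chosen point, and the Voronoi
cell of `p` has area at least `γ (log n)/n`. -/
theorem stmt_12 :
    ∃ γ c₁ : ℝ, 0 < γ ∧ 0 < c₁ ∧ ∃ n₀ : ℕ, ∀ n : ℕ, n₀ ≤ n →
      1 - ENNReal.ofReal ((n : ℝ) ^ (-4 : ℝ)) ≤
        (Measure.pi fun _ : Fin n => (volume : Measure T2))
          {ω : Fin n → T2 |
            Real.sqrt n / 30 ≤
              (({p ∈ Set.range ω |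
                  (∀ q ∈ Set.range ω, dT q p ≤ c₁ * Real.sqrt (Real.log n / n) → q = p) ∧
                  ENNReal.ofReal (γ * Real.log n / n) ≤
                    volume (vor p (Set.range ω))}).ncard : ℝ)} := by
  obtain ⟨n₀, hn₀⟩ := eventually_atTop.1 <|
    (eventually_ge_atTop 2).and <| eventually_exp_neg_mul_rpow_le_rpow (a := 1 / 200)
      (r := 3 / 4) (by norm_num) (by norm_num) (-4)
  refine ⟨1 / 256, 1 / 8, by norm_num, by norm_num, n₀, fun n hn ↦ ?_⟩
  obtain ⟨two_le_n, tail_le⟩ := hn₀ n hn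
  refine one_sub_ofReal_le_measure (fun ω hω ↦ ?_)
    ((measureReal_card_isolatedIndices_isolationRadius_le two_le_n).trans tail_le)
  have card_le := card_isolatedIndices_le_ncard (isolationRadius n).coe_nonneg
    ((isolationRadius_le n).trans (by norm_num)) ω
  have area_eq : (isolationRadius n : ℝ) ^ 2 / 4 = 1 / 256 * Real.log n / n := by
    rw [sq_isolationRadius]
    ring
  rw [area_eq] at card_le
  simp only [Set.mem_compl_iff, Set.mem_ofPred_eq, not_le] at hω
  exact (Nat.cast_le.2 card_le).trans hω.le
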